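/- Let R(n) denote the number of 2-colored Rogers-Ramanujan partitions of n. Then ∑_{n≥0} R(n) q^n = [∏_{k≥1} (1+q^k)/(1-q^k)] · ∏_{k≥0} (1-q^{4k+2})^2 (1-q^{4k+4}). -/

import Mathlib

/-- A valid single-color part set of a 2-colored Rogers-Ramanujan partition:
all parts positive and any two distinct parts differ by at least 2. -/
def IsRRColor (A : Finset ℕ) : Prop :=
  (∀ a ∈ A, 1 ≤ a) ∧ ∀ a ∈ A, ∀ b ∈ A, a ≠ b → 2 ≤ max a b - min a b

/-- A 2-colored Rogers-Ramanujan partition: a pair of part sets (black, red),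
each a valid color class, with no common part. -/
def TwoColoredRR (p : Finset ℕ × Finset ℕ) : Prop :=
  IsRRColor p.1 ∧ IsRRColor p.2 ∧ Disjoint p.1 p.2

/-- `R n`: the number of 2-colored Rogers-Ramanujan partitions of `n`. -/
noncomputable def Rcount (n : ℕ) : ℕ :=
  Nat.card {p : Finset ℕ × Finset ℕ // TwoColoredRR p ∧ p.1.sum id + p.2.sum id = n}

/-!
Let `c_m` be the generating function of the 2-colored Rogers-Ramanujan partitions with `m` parts
and `g_m` that of those among them in which `1` is not a black part. Subtracting `1` from every
part gives `c_{m+1} = g_{m+1} + q^{m+1} g_m` and `g_{m+1} = q^{m+1} c_{m+1} + q^{m+1} g_m`.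
Eliminating `g` leaves `(1 - q^{m+1}) c_{m+1} = q^{m+1} (1 + q^m) c_m`, so `c_m` is a summand of
Lebesgue's series `∑ q^{m(m+1)/2} (-b; q)_m / (q; q)_m` at `b = 1`. That series satisfies
`S(b) = (1 + b q) S(b q²)`, whence `S(b) = (-b q; q²)_∞ (-q; q)_∞`; at `b = 1` the product is
`(-q; q)_∞ (q², q², q⁴; q⁴)_∞ / (q; q)_∞`.
-/

open Filter Topology Finset

section QPochhammer

variable {𝕜 : Type*} [NormedField 𝕜]

lemma norm_pow_lt_one {q : 𝕜} (hq : ‖q‖ < 1) {n : ℕ} (hn : n ≠ 0) : ‖q ^ n‖ < 1 := by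
  rw [norm_pow]
  exact pow_lt_one₀ (norm_nonneg q) hq hn

lemma one_sub_pow_succ_ne_zero {q : 𝕜} (hq : ‖q‖ < 1) (m : ℕ) : 1 - q ^ (m + 1) ≠ 0 := by
  rw [sub_ne_zero]
  intro h
  have hlt := norm_pow_lt_one hq m.succ_ne_zero
  rw [← h, norm_one] at hlt
  exact lt_irrefl 1 hlt

/-- The infinite `q`-Pochhammer symbol `(c; p)_∞`, with the junk value of `∏'` where the product
does not converge. -/
noncomputable def qPochhammerInf (c p : 𝕜) : 𝕜 :=
  ∏' k : ℕ, (1 - c * p ^ k)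

lemma summable_norm_neg_mul_pow {p : 𝕜} (hp : ‖p‖ < 1) (c : 𝕜) :
    Summable fun k : ℕ ↦ ‖-(c * p ^ k)‖ := by
  simpa only [norm_neg, norm_mul, norm_pow] using
    (summable_geometric_of_lt_one (norm_nonneg p) hp).mul_left ‖c‖

variable [CompleteSpace 𝕜] {p : 𝕜}

lemma multipliable_one_sub_mul_pow (hp : ‖p‖ < 1) (c : 𝕜) :
    Multipliable fun k : ℕ ↦ 1 - c * p ^ k := by
  simpa only [sub_eq_add_neg] using
    multipliable_one_add_of_summable (summable_norm_neg_mul_pow hp c)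

lemma qPochhammerInf_ne_zero (hp : ‖p‖ < 1) {c : 𝕜} (hc : ∀ k : ℕ, 1 - c * p ^ k ≠ 0) :
    qPochhammerInf c p ≠ 0 := by
  simp only [sub_eq_add_neg] at hc
  simpa only [qPochhammerInf, sub_eq_add_neg] using
    tprod_one_add_ne_zero_of_summable hc (summable_norm_neg_mul_pow hp c)

lemma qPochhammerInf_eq_even_mul_odd (hp : ‖p‖ < 1) (c : 𝕜) :
    qPochhammerInf c p = qPochhammerInf c (p ^ 2) * qPochhammerInf (c * p) (p ^ 2) := by
  have hp2 : ‖p ^ 2‖ < 1 := norm_pow_lt_one hp two_ne_zero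
  have heven (k : ℕ) : c * p ^ (2 * k) = c * (p ^ 2) ^ k := by ring
  have hodd (k : ℕ) : c * p ^ (2 * k + 1) = c * p * (p ^ 2) ^ k := by ring
  have h := tprod_even_mul_odd (f := fun k ↦ 1 - c * p ^ k)
    (by simpa only [heven] using multipliable_one_sub_mul_pow hp2 c)
    (by simpa only [hodd] using multipliable_one_sub_mul_pow hp2 (c * p))
  simpa only [heven, hodd, qPochhammerInf] using h.symm

lemma qPochhammerInf_mul_neg (hp : ‖p‖ < 1) (c : 𝕜) :
    qPochhammerInf c p * qPochhammerInf (-c) p = qPochhammerInf (c ^ 2) (p ^ 2) := by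
  rw [qPochhammerInf, qPochhammerInf, qPochhammerInf,
    ← (multipliable_one_sub_mul_pow hp c).tprod_mul (multipliable_one_sub_mul_pow hp (-c))]
  exact tprod_congr fun k ↦ by ring

lemma eq_qPochhammerInf_mul_of_functional_eq (hp : ‖p‖ < 1) {c : 𝕜} {f : 𝕜 → 𝕜}
    (hf : ContinuousAt f 0) (h : ∀ x, f x = (1 - c * x) * f (x * p)) (x : 𝕜) :
    f x = qPochhammerInf (c * x) p * f 0 := by
  have iterate (n : ℕ) : f x = (∏ k ∈ range n, (1 - c * x * p ^ k)) * f (x * p ^ n) := by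
    induction n with
    | zero => simp
    | succ n ih =>
      rw [ih, h, prod_range_succ, pow_succ, mul_assoc x]
      ring
  have hxp : Tendsto (fun n : ℕ ↦ x * p ^ n) atTop (𝓝 0) := by
    simpa only [mul_zero] using (tendsto_pow_atTop_nhds_zero_of_norm_lt_one hp).const_mul x
  exact tendsto_nhds_unique (tendsto_const_nhds.congr iterate)
    ((multipliable_one_sub_mul_pow hp (c * x)).tendsto_prod_tprod_nat.mul (hf.tendsto.comp hxp))

lemma qPochhammerInf_neg_self_mul_neg_sq {q : 𝕜} (hq : ‖q‖ < 1) :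
    qPochhammerInf (-q) q * qPochhammerInf (-q) (q ^ 2) =
      qPochhammerInf (-q) q / qPochhammerInf q q *
        (qPochhammerInf (q ^ 2) (q ^ 4) ^ 2 * qPochhammerInf (q ^ 4) (q ^ 4)) := by
  have hq2 : ‖q ^ 2‖ < 1 := norm_pow_lt_one hq two_ne_zero
  have hne : qPochhammerInf q q ≠ 0 :=
    qPochhammerInf_ne_zero hq fun k ↦ by
      simpa only [pow_succ'] using one_sub_pow_succ_ne_zero hq k
  have split_q : qPochhammerInf q q =
      qPochhammerInf q (q ^ 2) * qPochhammerInf (q ^ 2) (q ^ 2) := by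
    simpa only [← sq] using qPochhammerInf_eq_even_mul_odd hq q
  have split_q2 : qPochhammerInf (q ^ 2) (q ^ 2) =
      qPochhammerInf (q ^ 2) (q ^ 4) * qPochhammerInf (q ^ 4) (q ^ 4) := by
    have h := qPochhammerInf_eq_even_mul_odd hq2 (q ^ 2)
    rwa [← pow_add, ← pow_mul] at h
  have conj : qPochhammerInf q (q ^ 2) * qPochhammerInf (-q) (q ^ 2) =
      qPochhammerInf (q ^ 2) (q ^ 4) := by
    simpa only [← pow_mul] using qPochhammerInf_mul_neg hq2 q
  rw [div_mul_eq_mul_div, eq_div_iff hne, split_q, split_q2, ← conj]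
  ring

lemma tprod_one_add_div_one_sub {q : 𝕜} (hq : ‖q‖ < 1) :
    ∏' k : ℕ, (1 + q ^ (k + 1)) / (1 - q ^ (k + 1)) =
      qPochhammerInf (-q) q / qPochhammerInf q q := by
  have hne : qPochhammerInf q q ≠ 0 :=
    qPochhammerInf_ne_zero hq fun k ↦ by
      simpa only [pow_succ'] using one_sub_pow_succ_ne_zero hq k
  rw [qPochhammerInf, qPochhammerInf, ← (multipliable_one_sub_mul_pow hq (-q)).tprod_div₀
    (multipliable_one_sub_mul_pow hq q) hne]
  exact tprod_congr fun k ↦ by rw [pow_succ']; ring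

lemma tprod_one_sub_sq_mul_one_sub {q : 𝕜} (hq : ‖q‖ < 1) :
    ∏' k : ℕ, (1 - q ^ (4 * k + 2)) ^ 2 * (1 - q ^ (4 * k + 4)) =
      qPochhammerInf (q ^ 2) (q ^ 4) ^ 2 * qPochhammerInf (q ^ 4) (q ^ 4) := by
  have hq4 : ‖q ^ 4‖ < 1 := norm_pow_lt_one hq four_ne_zero
  have h2 := multipliable_one_sub_mul_pow hq4 (q ^ 2)
  have h4 := multipliable_one_sub_mul_pow hq4 (q ^ 4)
  rw [qPochhammerInf, qPochhammerInf, sq, ← h2.tprod_mul h2, ← (h2.mul h2).tprod_mul h4]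
  exact tprod_congr fun k ↦ by ring

end QPochhammer

section LebesgueTerm

variable {K : Type*} [Field K]

/-- The summand `x^m q^{m(m+1)/2} (-b; q)_m / (q; q)_m` of Lebesgue's series, with an additional
variable `x` marking the index. -/
def lebesgueTerm (q b x : K) (m : ℕ) : K :=
  ∏ i ∈ range m, x * q ^ (i + 1) * (1 + b * q ^ i) / (1 - q ^ (i + 1))

@[simp]
lemma lebesgueTerm_zero (q b x : K) : lebesgueTerm q b x 0 = 1 :=
  prod_range_zero _

lemma lebesgueTerm_succ (q b x : K) (m : ℕ) : lebesgueTerm q b x (m + 1) =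
    lebesgueTerm q b x m * (x * q ^ (m + 1) * (1 + b * q ^ m) / (1 - q ^ (m + 1))) :=
  prod_range_succ _ _

lemma lebesgueTerm_mul_right (q b x y : K) (m : ℕ) :
    lebesgueTerm q b (x * y) m = y ^ m * lebesgueTerm q b x m := by
  induction m with
  | zero => simp
  | succ m ih => rw [lebesgueTerm_succ, lebesgueTerm_succ, ih]; ring

lemma lebesgueTerm_mul_base (q b x : K) (m : ℕ) :
    lebesgueTerm q (b * q) x m * (1 + b) = lebesgueTerm q b x m * (1 + b * q ^ m) := by
  induction m with
  | zero => simp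
  | succ m ih =>
    rw [lebesgueTerm_succ, lebesgueTerm_succ]
    linear_combination (x * q ^ (m + 1) * (1 + b * q * q ^ m) / (1 - q ^ (m + 1))) * ih

end LebesgueTerm

section LebesgueSeries

variable {𝕜 : Type*} [NormedField 𝕜] {q : 𝕜}

lemma lebesgueTerm_succ_mul (hq : ‖q‖ < 1) (b x : 𝕜) (m : ℕ) :
    lebesgueTerm q b x (m + 1) * (1 - q ^ (m + 1)) =
      lebesgueTerm q b x m * (x * q ^ (m + 1) * (1 + b * q ^ m)) := by
  rw [lebesgueTerm_succ, mul_assoc, div_mul_cancel₀ _ (one_sub_pow_succ_ne_zero hq m)]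

lemma lebesgueTerm_one_functional_eq (hq : ‖q‖ < 1) (b : 𝕜) (m : ℕ) :
    lebesgueTerm q b 1 (m + 1) = (1 + q * b) * lebesgueTerm q (b * q ^ 2) 1 (m + 1) +
      q * b * (lebesgueTerm q (b * q) q m - lebesgueTerm q (b * q) q (m + 1)) := by
  have hscale (n : ℕ) : lebesgueTerm q (b * q) q n = q ^ n * lebesgueTerm q (b * q) 1 n := by
    simpa only [one_mul] using lebesgueTerm_mul_right q (b * q) 1 q n
  have hb := lebesgueTerm_mul_base q b 1 m
  have hbq := lebesgueTerm_mul_base q (b * q) 1 (m + 1)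
  have hsucc_b := lebesgueTerm_succ_mul hq b 1 m
  have hsucc_bq := lebesgueTerm_succ_mul hq (b * q) 1 m
  rw [hscale, hscale, sq, ← mul_assoc]
  apply mul_right_cancel₀ (one_sub_pow_succ_ne_zero hq m)
  linear_combination hsucc_b - q ^ (m + 1) * hb - (1 - q ^ (m + 1)) * hbq
    + (b * q * q ^ (m + 1) - (1 + b * q * q ^ (m + 1))) * hsucc_bq

lemma norm_lebesgueTerm_le (hq : ‖q‖ < 1) {b x : 𝕜} {β ξ : ℝ} (hb : ‖b‖ ≤ β) (hx : ‖x‖ ≤ ξ)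
    (m : ℕ) : ‖lebesgueTerm q b x m‖ ≤ lebesgueTerm ‖q‖ β ξ m := by
  rw [lebesgueTerm, norm_prod]
  refine prod_le_prod (fun _ _ ↦ norm_nonneg _) fun i _ ↦ ?_
  have hβ : 0 ≤ β := (norm_nonneg b).trans hb
  have hξ : 0 ≤ ξ := (norm_nonneg x).trans hx
  have hpow : ‖q‖ ^ (i + 1) < 1 := pow_lt_one₀ (norm_nonneg q) hq i.succ_ne_zero
  have hden : 1 - ‖q‖ ^ (i + 1) ≤ ‖1 - q ^ (i + 1)‖ := by
    simpa only [norm_one, norm_pow] using norm_sub_norm_le 1 (q ^ (i + 1))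
  have hnum : ‖1 + b * q ^ i‖ ≤ 1 + β * ‖q‖ ^ i := by
    calc ‖1 + b * q ^ i‖ ≤ 1 + ‖b‖ * ‖q‖ ^ i := by
          simpa only [norm_one, norm_mul, norm_pow] using norm_add_le 1 (b * q ^ i)
      _ ≤ 1 + β * ‖q‖ ^ i := by gcongr
  rw [norm_div, norm_mul, norm_mul, norm_pow]
  exact div_le_div₀ (by positivity) (by gcongr) (sub_pos.2 hpow) hden

lemma tendsto_lebesgueTerm_ratio (hq : ‖q‖ < 1) (b x : 𝕜) :
    Tendsto (fun m : ℕ ↦ x * q ^ (m + 1) * (1 + b * q ^ m) / (1 - q ^ (m + 1))) atTop (𝓝 0) := by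
  have hpow := tendsto_pow_atTop_nhds_zero_of_norm_lt_one hq
  have hpow_succ : Tendsto (fun m : ℕ ↦ q ^ (m + 1)) atTop (𝓝 0) :=
    (tendsto_add_atTop_iff_nat 1).2 hpow
  simpa [Pi.div_def] using ((hpow_succ.const_mul x).mul ((hpow.const_mul b).const_add 1)).div
    (hpow_succ.const_sub 1) (by simp)

/-- Lebesgue's series `∑ x^m q^{m(m+1)/2} (-b; q)_m / (q; q)_m`. -/
noncomputable def lebesgueSeries (q b x : 𝕜) : 𝕜 :=
  ∑' m, lebesgueTerm q b x m

lemma lebesgueSeries_zero_right (q b : 𝕜) : lebesgueSeries q b 0 = 1 := by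
  rw [lebesgueSeries, tsum_eq_single 0 fun m hm ↦ ?_, lebesgueTerm_zero]
  obtain ⟨k, rfl⟩ := Nat.exists_eq_succ_of_ne_zero hm
  simp [lebesgueTerm_succ]

variable [CompleteSpace 𝕜]

lemma summable_lebesgueTerm (hq : ‖q‖ < 1) (b x : 𝕜) : Summable (lebesgueTerm q b x) := by
  refine summable_of_ratio_norm_eventually_le (r := 1 / 2) (by norm_num) ?_
  have hratio := (tendsto_lebesgueTerm_ratio hq b x).norm
  rw [norm_zero] at hratio
  filter_upwards [hratio.eventually_le_const one_half_pos] with m hm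
  rw [lebesgueTerm_succ, norm_mul, mul_comm]
  gcongr

lemma continuous_lebesgueSeries (hq : ‖q‖ < 1) :
    Continuous fun v : 𝕜 × 𝕜 ↦ lebesgueSeries q v.1 v.2 := by
  refine continuous_iff_continuousAt.2 fun v ↦ ?_
  have hb : ∀ᶠ w : 𝕜 × 𝕜 in 𝓝 v, ‖w.1‖ ≤ ‖v.1‖ + 1 :=
    continuous_fst.norm.continuousAt.eventually_le_const (lt_add_one ‖v.1‖)
  have hx : ∀ᶠ w : 𝕜 × 𝕜 in 𝓝 v, ‖w.2‖ ≤ ‖v.2‖ + 1 :=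
    continuous_snd.norm.continuousAt.eventually_le_const (lt_add_one ‖v.2‖)
  refine tendsto_tsum_of_dominated_convergence
    (bound := lebesgueTerm ‖q‖ (‖v.1‖ + 1) (‖v.2‖ + 1))
    (summable_lebesgueTerm (by rwa [norm_norm]) _ _) (fun m ↦ ?_) ?_
  · have : Continuous fun w : 𝕜 × 𝕜 ↦ lebesgueTerm q w.1 w.2 m := by
      unfold lebesgueTerm
      fun_prop
    exact this.continuousAt
  · filter_upwards [hb, hx] with w hwb hwx using norm_lebesgueTerm_le hq hwb hwx

lemma lebesgueSeries_zero_left_functional_eq (hq : ‖q‖ < 1) (x : 𝕜) :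
    lebesgueSeries q 0 x = (1 + q * x) * lebesgueSeries q 0 (x * q) := by
  have hterm (m : ℕ) : lebesgueTerm q 0 x (m + 1) =
      lebesgueTerm q 0 (x * q) (m + 1) + q * x * lebesgueTerm q 0 (x * q) m := by
    rw [lebesgueTerm_mul_right, lebesgueTerm_mul_right]
    linear_combination lebesgueTerm_succ_mul hq 0 x m
  have hs := summable_lebesgueTerm hq 0 (x * q)
  have hs_succ := (summable_nat_add_iff 1).2 hs
  calc lebesgueSeries q 0 x
      = 1 + ∑' m, lebesgueTerm q 0 x (m + 1) := by
        rw [lebesgueSeries, (summable_lebesgueTerm hq 0 x).tsum_eq_zero_add, lebesgueTerm_zero]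
    _ = 1 + ∑' m, lebesgueTerm q 0 (x * q) (m + 1) + q * x * lebesgueSeries q 0 (x * q) := by
        simp only [hterm]
        rw [hs_succ.tsum_add (hs.mul_left _), tsum_mul_left, add_assoc, lebesgueSeries]
    _ = (1 + q * x) * lebesgueSeries q 0 (x * q) := by
        rw [lebesgueSeries, hs.tsum_eq_zero_add, lebesgueTerm_zero]
        ring

lemma lebesgueSeries_one_functional_eq (hq : ‖q‖ < 1) (b : 𝕜) :
    lebesgueSeries q b 1 = (1 + q * b) * lebesgueSeries q (b * q ^ 2) 1 := by
  have hs := summable_lebesgueTerm hq (b * q ^ 2) 1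
  have hs_succ := (summable_nat_add_iff 1).2 hs
  have hu := summable_lebesgueTerm hq (b * q) q
  have hu_succ := (summable_nat_add_iff 1).2 hu
  have telescope :
      ∑' m, (lebesgueTerm q (b * q) q m - lebesgueTerm q (b * q) q (m + 1)) = 1 := by
    rw [hu.tsum_sub hu_succ, hu.tsum_eq_zero_add, lebesgueTerm_zero, add_sub_cancel_right]
  calc lebesgueSeries q b 1
      = 1 + ∑' m, lebesgueTerm q b 1 (m + 1) := by
        rw [lebesgueSeries, (summable_lebesgueTerm hq b 1).tsum_eq_zero_add, lebesgueTerm_zero]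
    _ = 1 + (1 + q * b) * ∑' m, lebesgueTerm q (b * q ^ 2) 1 (m + 1) + q * b := by
        simp only [lebesgueTerm_one_functional_eq hq b]
        rw [(hs_succ.mul_left _).tsum_add ((hu.sub hu_succ).mul_left _), tsum_mul_left,
          tsum_mul_left, telescope, mul_one, add_assoc]
    _ = (1 + q * b) * lebesgueSeries q (b * q ^ 2) 1 := by
        rw [lebesgueSeries, hs.tsum_eq_zero_add, lebesgueTerm_zero]
        ring

theorem euler_identity (hq : ‖q‖ < 1) (x : 𝕜) :
    lebesgueSeries q 0 x = qPochhammerInf (-q * x) q := by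
  have hcont : Continuous fun y ↦ lebesgueSeries q 0 y :=
    (continuous_lebesgueSeries hq).comp (.prodMk_right 0)
  rw [eq_qPochhammerInf_mul_of_functional_eq hq hcont.continuousAt (c := -q) (fun y ↦ by
    rw [neg_mul, sub_neg_eq_add, lebesgueSeries_zero_left_functional_eq hq]),
    lebesgueSeries_zero_right, mul_one]

theorem lebesgue_identity (hq : ‖q‖ < 1) (b : 𝕜) :
    lebesgueSeries q b 1 = qPochhammerInf (-q * b) (q ^ 2) * qPochhammerInf (-q) q := by
  have hq2 : ‖q ^ 2‖ < 1 := norm_pow_lt_one hq two_ne_zero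
  have hcont : Continuous fun c ↦ lebesgueSeries q c 1 :=
    (continuous_lebesgueSeries hq).comp (.prodMk_left 1)
  rw [eq_qPochhammerInf_mul_of_functional_eq hq2 hcont.continuousAt (c := -q) (fun c ↦ by
    rw [neg_mul, sub_neg_eq_add, lebesgueSeries_one_functional_eq hq]),
    euler_identity hq, mul_one]

end LebesgueSeries

section Combinatorics

lemma isRRColor_iff {A : Finset ℕ} : IsRRColor A ↔ 0 ∉ A ∧ ∀ a ∈ A, a + 1 ∉ A := by
  refine and_congr ⟨fun h h0 ↦ absurd (h 0 h0) (by decide), fun h a ha ↦ ?_⟩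
    ⟨fun h a ha ha' ↦ ?_, fun h a ha b hb hab ↦ ?_⟩
  · exact Nat.one_le_iff_ne_zero.2 fun ha0 ↦ h (ha0 ▸ ha)
  · have := h a ha (a + 1) ha' (by omega)
    omega
  · have hb' : b ≠ a + 1 := fun e ↦ h a ha (e ▸ hb)
    have ha' : a ≠ b + 1 := fun e ↦ h b hb (e ▸ ha)
    omega

lemma TwoColoredRR.swap {p : Finset ℕ × Finset ℕ} (hp : TwoColoredRR p) : TwoColoredRR p.swap :=
  ⟨hp.2.1, hp.1, hp.2.2.symm⟩

/-- Adds `1` to every part. -/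
def shiftParts (A : Finset ℕ) : Finset ℕ :=
  A.map (addRightEmbedding 1)

@[simp]
lemma succ_mem_shiftParts {A : Finset ℕ} {a : ℕ} : a + 1 ∈ shiftParts A ↔ a ∈ A := by
  simp [shiftParts]

@[simp]
lemma one_mem_shiftParts {A : Finset ℕ} : 1 ∈ shiftParts A ↔ 0 ∈ A :=
  succ_mem_shiftParts (a := 0)

@[simp]
lemma zero_notMem_shiftParts (A : Finset ℕ) : 0 ∉ shiftParts A := by
  simp [shiftParts]

@[simp]
lemma card_shiftParts (A : Finset ℕ) : #(shiftParts A) = #A :=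
  card_map _

@[simp]
lemma sum_shiftParts (A : Finset ℕ) : (shiftParts A).sum id = A.sum id + #A := by
  simp [shiftParts, sum_add_distrib]

lemma shiftParts_injective : Function.Injective shiftParts :=
  map_injective _

lemma exists_shiftParts_eq {A : Finset ℕ} (hA : 0 ∉ A) : ∃ B, shiftParts B = A := by
  refine ⟨A.image Nat.pred, ?_⟩
  ext a
  cases a with
  | zero => simpa using hA
  | succ a =>
    simp only [succ_mem_shiftParts, mem_image]
    refine ⟨?_, fun ha ↦ ⟨a + 1, ha, rfl⟩⟩
    rintro ⟨b, hb, rfl⟩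
    rwa [Nat.pred_eq_sub_one, Nat.sub_one_add_one fun h0 ↦ hA (h0 ▸ hb)]

lemma disjoint_shiftParts {A B : Finset ℕ} :
    Disjoint (shiftParts A) (shiftParts B) ↔ Disjoint A B :=
  disjoint_map _

lemma isRRColor_shiftParts {A : Finset ℕ} :
    IsRRColor (shiftParts A) ↔ ∀ a ∈ A, a + 1 ∉ A := by
  simp [isRRColor_iff, shiftParts]

lemma isRRColor_insert_one_shiftParts {A : Finset ℕ} (hA : 0 ∉ A) :
    IsRRColor (insert 1 (shiftParts A)) ↔ IsRRColor A ∧ 1 ∉ A := by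
  simp only [isRRColor_iff (A := A), isRRColor_iff (A := insert 1 (shiftParts A))]
  simp [shiftParts, hA, and_comm]

lemma twoColoredRR_shiftParts {A B : Finset ℕ} :
    TwoColoredRR (shiftParts A, shiftParts B) ∧ 1 ∉ shiftParts A ∧ 1 ∉ shiftParts B ↔
      TwoColoredRR (A, B) := by
  simp only [TwoColoredRR, isRRColor_shiftParts, disjoint_shiftParts, one_mem_shiftParts,
    isRRColor_iff (A := A), isRRColor_iff (A := B)]
  tauto

lemma twoColoredRR_insert_one_shiftParts {A B : Finset ℕ} (hA : 0 ∉ A) :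
    TwoColoredRR (insert 1 (shiftParts A), shiftParts B) ↔ TwoColoredRR (A, B) ∧ 1 ∉ A := by
  simp only [TwoColoredRR, isRRColor_insert_one_shiftParts hA, isRRColor_shiftParts,
    disjoint_insert_left, disjoint_shiftParts, one_mem_shiftParts, isRRColor_iff (A := B)]
  tauto

lemma card_insert_one_shiftParts {A : Finset ℕ} (hA : 0 ∉ A) :
    #(insert 1 (shiftParts A)) = #A + 1 := by
  rw [card_insert_of_notMem (by rwa [one_mem_shiftParts]), card_shiftParts]

lemma sum_insert_one_shiftParts {A : Finset ℕ} (hA : 0 ∉ A) :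
    (insert 1 (shiftParts A)).sum id = A.sum id + #A + 1 := by
  rw [sum_insert (by rwa [one_mem_shiftParts]), sum_shiftParts, id, add_comm]

lemma exists_insert_one_shiftParts_eq {A : Finset ℕ} (h0 : 0 ∉ A) (h1 : 1 ∈ A) :
    ∃ B, 0 ∉ B ∧ insert 1 (shiftParts B) = A := by
  obtain ⟨B, hB⟩ := exists_shiftParts_eq fun h ↦ h0 (mem_of_mem_erase (a := 1) h)
  refine ⟨B, ?_, by rw [hB, insert_erase h1]⟩
  rw [← one_mem_shiftParts, hB]
  exact notMem_erase 1 A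

/-- The number of parts of a pair of part sets. -/
def numParts (p : Finset ℕ × Finset ℕ) : ℕ :=
  #p.1 + #p.2

/-- The sum of the parts of a pair of part sets. -/
def sumParts (p : Finset ℕ × Finset ℕ) : ℕ :=
  p.1.sum id + p.2.sum id

/-- The 2-colored Rogers-Ramanujan partitions, of any size, with exactly `m` parts. -/
def rrPairs (m : ℕ) : Set (Finset ℕ × Finset ℕ) :=
  {p | TwoColoredRR p ∧ numParts p = m}

lemma rrPairs_zero : rrPairs 0 = {(∅, ∅)} := by
  ext ⟨A, B⟩
  simp only [rrPairs, numParts, Set.mem_ofPred_eq, Nat.add_eq_zero_iff, card_eq_zero,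
    Set.mem_singleton_iff, Prod.mk.injEq, and_iff_right_iff_imp]
  rintro ⟨rfl, rfl⟩
  simp [TwoColoredRR, IsRRColor]

lemma swap_bijOn_rrPairs_one_mem (m : ℕ) :
    Set.BijOn Prod.swap {p ∈ rrPairs m | 1 ∈ p.1} {p ∈ rrPairs m | 1 ∈ p.2} := by
  refine Set.BijOn.mk ?_ Prod.swap_injective.injOn ?_
  · rintro p ⟨⟨hp, hm⟩, h1⟩
    exact ⟨⟨hp.swap, (add_comm _ _).trans hm⟩, h1⟩
  · rintro p ⟨⟨hp, hm⟩, h1⟩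
    exact ⟨p.swap, ⟨⟨hp.swap, (add_comm _ _).trans hm⟩, h1⟩, p.swap_swap⟩

lemma shiftParts_bijOn_rrPairs (m : ℕ) :
    Set.BijOn (Prod.map shiftParts shiftParts) (rrPairs m)
      {p ∈ rrPairs m | 1 ∉ p.1 ∧ 1 ∉ p.2} := by
  have key {A B : Finset ℕ} :
      (shiftParts A, shiftParts B) ∈ {p ∈ rrPairs m | 1 ∉ p.1 ∧ 1 ∉ p.2} ↔ (A, B) ∈ rrPairs m := by
    simp only [rrPairs, numParts, Set.mem_ofPred_eq, card_shiftParts,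
      ← twoColoredRR_shiftParts (A := A)]
    tauto
  refine Set.BijOn.mk (fun _ hp ↦ key.2 hp)
    (shiftParts_injective.prodMap shiftParts_injective).injOn ?_
  rintro ⟨A, B⟩ h
  obtain ⟨A', rfl⟩ := exists_shiftParts_eq (isRRColor_iff.1 h.1.1.1).1
  obtain ⟨B', rfl⟩ := exists_shiftParts_eq (isRRColor_iff.1 h.1.1.2.1).1
  exact ⟨(A', B'), key.1 h, rfl⟩

lemma insert_one_bijOn_rrPairs (m : ℕ) :
    Set.BijOn (Prod.map (insert 1 ∘ shiftParts) shiftParts) {p ∈ rrPairs m | 1 ∉ p.1}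
      {p ∈ rrPairs (m + 1) | 1 ∈ p.1} := by
  have key {A B : Finset ℕ} (hA : 0 ∉ A) :
      (insert 1 (shiftParts A), shiftParts B) ∈ {p ∈ rrPairs (m + 1) | 1 ∈ p.1} ↔
        (A, B) ∈ {p ∈ rrPairs m | 1 ∉ p.1} := by
    simp only [rrPairs, numParts, Set.mem_ofPred_eq, card_shiftParts, mem_insert_self, and_true,
      card_insert_one_shiftParts hA, twoColoredRR_insert_one_shiftParts hA]
    grind
  have zero_notMem {p} (hp : p ∈ {p ∈ rrPairs m | 1 ∉ p.1}) : 0 ∉ p.1 :=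
    (isRRColor_iff.1 hp.1.1.1).1
  refine Set.BijOn.mk (fun p hp ↦ (key (zero_notMem hp)).2 hp) ?_ ?_
  · rintro ⟨A, B⟩ hAB ⟨A', B'⟩ hAB' h
    obtain ⟨hfst, hsnd⟩ := Prod.mk.inj h
    have hA : 1 ∉ shiftParts A := one_mem_shiftParts.not.2 (zero_notMem hAB)
    have hA' : 1 ∉ shiftParts A' := one_mem_shiftParts.not.2 (zero_notMem hAB')
    have hshift : shiftParts A = shiftParts A' := by
      rw [← erase_insert hA, ← erase_insert hA']
      exact congrArg (Finset.erase · 1) hfst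
    rw [shiftParts_injective hshift, shiftParts_injective hsnd]
  · rintro ⟨A, B⟩ h
    obtain ⟨A', hA', rfl⟩ := exists_insert_one_shiftParts_eq (isRRColor_iff.1 h.1.1.1).1 h.2
    obtain ⟨B', rfl⟩ := exists_shiftParts_eq (isRRColor_iff.1 h.1.1.2.1).1
    exact ⟨(A', B'), (key hA').1 h, rfl⟩

end Combinatorics

section GeneratingFunctions

variable {𝕜 : Type*} [NormedField 𝕜]

/-- The generating function, by sum of parts, of a set of pairs of part sets. -/
noncomputable def pairGenFun (q : 𝕜) (S : Set (Finset ℕ × Finset ℕ)) : 𝕜 :=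
  ∑' p : S, q ^ sumParts p

lemma pairGenFun_of_bijOn (q : 𝕜) {S T : Set (Finset ℕ × Finset ℕ)}
    {f : Finset ℕ × Finset ℕ → Finset ℕ × Finset ℕ} (hf : Set.BijOn f S T) {d : ℕ}
    (hd : ∀ p ∈ S, sumParts (f p) = sumParts p + d) :
    pairGenFun q T = q ^ d * pairGenFun q S := by
  rw [pairGenFun, pairGenFun, ← hf.image_eq, tsum_image (fun p ↦ q ^ sumParts p) hf.injOn,
    ← tsum_mul_left]
  exact tsum_congr fun p ↦ by rw [hd p p.2, pow_add, mul_comm]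

lemma pairGenFun_eq_card_mul_pow (q : 𝕜) {S : Set (Finset ℕ × Finset ℕ)} {n : ℕ}
    (hS : ∀ p ∈ S, sumParts p = n) : pairGenFun q S = Nat.card S * q ^ n := by
  rw [pairGenFun, tsum_congr fun p : S ↦ congrArg (q ^ ·) (hS p p.2), tsum_const, nsmul_eq_mul]

/-- The generating function of `rrPairs m`. -/
noncomputable def rrGenFun (q : 𝕜) (m : ℕ) : 𝕜 :=
  pairGenFun q (rrPairs m)

/-- The generating function of the elements of `rrPairs m` whose first color does not use the
part `1`. -/
noncomputable def rrGenFunOneFree (q : 𝕜) (m : ℕ) : 𝕜 :=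
  pairGenFun q {p ∈ rrPairs m | 1 ∉ p.1}

lemma pairGenFun_rrPairs_one_mem_fst (q : 𝕜) (m : ℕ) :
    pairGenFun q {p ∈ rrPairs (m + 1) | 1 ∈ p.1} = q ^ (m + 1) * rrGenFunOneFree q m := by
  refine pairGenFun_of_bijOn q (insert_one_bijOn_rrPairs m) fun p ⟨⟨hp, hm⟩, _⟩ ↦ ?_
  have h0 : 0 ∉ p.1 := (isRRColor_iff.1 hp.1).1
  simp only [← hm, sumParts, numParts, Prod.map_fst, Prod.map_snd, Function.comp_apply,
    sum_insert_one_shiftParts h0, sum_shiftParts]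
  ring

lemma pairGenFun_rrPairs_one_mem_snd (q : 𝕜) (m : ℕ) :
    pairGenFun q {p ∈ rrPairs (m + 1) | 1 ∈ p.2} = q ^ (m + 1) * rrGenFunOneFree q m := by
  rw [← pairGenFun_rrPairs_one_mem_fst, pairGenFun_of_bijOn q (d := 0)
    (swap_bijOn_rrPairs_one_mem (m + 1)) fun p _ ↦ add_comm _ _, pow_zero, one_mul]

lemma pairGenFun_rrPairs_one_notMem (q : 𝕜) (m : ℕ) :
    pairGenFun q {p ∈ rrPairs m | 1 ∉ p.1 ∧ 1 ∉ p.2} = q ^ m * rrGenFun q m := by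
  refine pairGenFun_of_bijOn q (shiftParts_bijOn_rrPairs m) fun p ⟨_, hm⟩ ↦ ?_
  simp only [← hm, sumParts, numParts, Prod.map_fst, Prod.map_snd, sum_shiftParts]
  ring

lemma rrGenFun_zero (q : 𝕜) : rrGenFun q 0 = 1 := by
  rw [rrGenFun, rrPairs_zero, pairGenFun_eq_card_mul_pow q (n := 0) (by rintro p rfl; rfl)]
  simp

lemma rrGenFunOneFree_zero (q : 𝕜) : rrGenFunOneFree q 0 = 1 := by
  have h : {p ∈ rrPairs 0 | 1 ∉ p.1} = rrPairs 0 :=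
    Set.sep_eq_self_iff_mem_true.2 fun p hp ↦ by
      rw [rrPairs_zero] at hp
      simp [Set.mem_singleton_iff.1 hp]
  rw [rrGenFunOneFree, h, ← rrGenFun, rrGenFun_zero]

variable [CompleteSpace 𝕜] {q : 𝕜}

lemma summable_pow_sumParts (hq : ‖q‖ < 1) : Summable fun p ↦ q ^ sumParts p := by
  have hsets : Summable fun A : Finset ℕ ↦ ‖q‖ ^ A.sum id := by
    have h := summable_finsetProd_of_summable_nonneg (fun _ ↦ by positivity)
      (summable_geometric_of_lt_one (norm_nonneg q) hq)
    exact h.congr fun A ↦ prod_pow_eq_pow_sum A id ‖q‖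
  refine Summable.of_norm ?_
  simpa only [norm_pow, norm_mul, sumParts, pow_add] using
    hsets.mul_of_nonneg hsets (fun _ ↦ by positivity) (fun _ ↦ by positivity)

lemma pairGenFun_sep_add_sep_not (hq : ‖q‖ < 1) (S : Set (Finset ℕ × Finset ℕ))
    (P : Finset ℕ × Finset ℕ → Prop) :
    pairGenFun q {p ∈ S | P p} + pairGenFun q {p ∈ S | ¬ P p} = pairGenFun q S := by
  have hdisj : Disjoint {p ∈ S | P p} {p ∈ S | ¬ P p} :=
    Set.disjoint_left.2 fun p hp hp' ↦ hp'.2 hp.2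
  have hunion : {p ∈ S | P p} ∪ {p ∈ S | ¬ P p} = S := by
    ext p
    simp only [Set.mem_union, Set.mem_ofPred_eq]
    tauto
  have h := ((summable_pow_sumParts hq).subtype {p ∈ S | P p}).tsum_union_disjoint hdisj
    ((summable_pow_sumParts hq).subtype {p ∈ S | ¬ P p})
  rw [hunion] at h
  exact h.symm

lemma hasSum_pairGenFun_fiber (hq : ‖q‖ < 1) (S : Set (Finset ℕ × Finset ℕ))
    (t : Finset ℕ × Finset ℕ → ℕ) :
    HasSum (fun n ↦ pairGenFun q {p ∈ S | t p = n}) (pairGenFun q S) := by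
  have h := ((summable_pow_sumParts hq).subtype S).hasSum.tsum_fiberwise fun p : S ↦ t p
  refine h.congr_fun fun n ↦ ?_
  exact ((Equiv.subtypeSubtypeEquivSubtypeInter (· ∈ S) (t · = n)).tsum_eq
    fun p : {p // p ∈ S ∧ t p = n} ↦ q ^ sumParts p).symm

lemma rrGenFun_succ (hq : ‖q‖ < 1) (m : ℕ) :
    rrGenFun q (m + 1) = q ^ (m + 1) * rrGenFunOneFree q m + rrGenFunOneFree q (m + 1) := by
  rw [← pairGenFun_rrPairs_one_mem_fst]
  exact (pairGenFun_sep_add_sep_not hq (rrPairs (m + 1)) fun p ↦ 1 ∈ p.1).symm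

lemma rrGenFunOneFree_succ (hq : ‖q‖ < 1) (m : ℕ) : rrGenFunOneFree q (m + 1) =
    q ^ (m + 1) * rrGenFunOneFree q m + q ^ (m + 1) * rrGenFun q (m + 1) := by
  have hsnd : {p ∈ {p ∈ rrPairs (m + 1) | 1 ∉ p.1} | 1 ∈ p.2} =
      {p ∈ rrPairs (m + 1) | 1 ∈ p.2} :=
    Set.ext fun p ↦ ⟨fun h ↦ ⟨h.1.1, h.2⟩, fun h ↦
      ⟨⟨h.1, disjoint_right.1 h.1.1.2.2 h.2⟩, h.2⟩⟩
  have hnone : {p ∈ {p ∈ rrPairs (m + 1) | 1 ∉ p.1} | 1 ∉ p.2} =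
      {p ∈ rrPairs (m + 1) | 1 ∉ p.1 ∧ 1 ∉ p.2} :=
    Set.ext fun p ↦ and_assoc
  rw [rrGenFunOneFree, ← pairGenFun_sep_add_sep_not hq _ fun p ↦ 1 ∈ p.2, hsnd, hnone,
    pairGenFun_rrPairs_one_mem_snd, pairGenFun_rrPairs_one_notMem]

lemma two_mul_rrGenFunOneFree (hq : ‖q‖ < 1) (m : ℕ) :
    2 * rrGenFunOneFree q m = (1 + q ^ m) * rrGenFun q m := by
  cases m with
  | zero => rw [rrGenFunOneFree_zero, rrGenFun_zero]; norm_num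
  | succ m => linear_combination rrGenFunOneFree_succ hq m - rrGenFun_succ hq m

theorem rrGenFun_eq_lebesgueTerm (hq : ‖q‖ < 1) (m : ℕ) :
    rrGenFun q m = lebesgueTerm q 1 1 m := by
  induction m with
  | zero => rw [rrGenFun_zero, lebesgueTerm_zero]
  | succ m ih =>
    apply mul_right_cancel₀ (one_sub_pow_succ_ne_zero hq m)
    rw [lebesgueTerm_succ_mul hq, ← ih]
    linear_combination rrGenFun_succ hq m + rrGenFunOneFree_succ hq m +
      q ^ (m + 1) * two_mul_rrGenFunOneFree hq m

lemma hasSum_Rcount_mul_pow (hq : ‖q‖ < 1) :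
    HasSum (fun n ↦ (Rcount n : 𝕜) * q ^ n) (pairGenFun q {p | TwoColoredRR p}) :=
  (hasSum_pairGenFun_fiber hq {p | TwoColoredRR p} sumParts).congr_fun fun _ ↦
    (pairGenFun_eq_card_mul_pow q fun _ hp ↦ hp.2).symm

lemma pairGenFun_twoColoredRR (hq : ‖q‖ < 1) :
    pairGenFun q {p | TwoColoredRR p} = lebesgueSeries q 1 1 := by
  rw [← (hasSum_pairGenFun_fiber hq {p | TwoColoredRR p} numParts).tsum_eq]
  exact tsum_congr (rrGenFun_eq_lebesgueTerm hq)

theorem Rcount_genfun_general (hq : ‖q‖ < 1) :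
    HasSum (fun n ↦ (Rcount n : 𝕜) * q ^ n)
      ((∏' k : ℕ, (1 + q ^ (k + 1)) / (1 - q ^ (k + 1))) *
        ∏' k : ℕ, (1 - q ^ (4 * k + 2)) ^ 2 * (1 - q ^ (4 * k + 4))) := by
  have h := hasSum_Rcount_mul_pow hq
  rwa [pairGenFun_twoColoredRR hq, lebesgue_identity hq, mul_one, mul_comm,
    qPochhammerInf_neg_self_mul_neg_sq hq, ← tprod_one_add_div_one_sub hq,
    ← tprod_one_sub_sq_mul_one_sub hq] at h

end GeneratingFunctions

/-- `∑_{n≥0} R(n) qⁿ = [∏_{k≥1} (1+qᵏ)/(1-qᵏ)] · ∏_{k≥0} (1-q^{4k+2})² (1-q^{4k+4})`. -/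
theorem Rcount_genfun (q : ℂ) (hq : ‖q‖ < 1) :
    ∑' n : ℕ, (Rcount n : ℂ) * q ^ n =
      (∏' k : ℕ, (1 + q ^ (k + 1)) / (1 - q ^ (k + 1))) *
        ∏' k : ℕ, (1 - q ^ (4 * k + 2)) ^ 2 * (1 - q ^ (4 * k + 4)) :=
  (Rcount_genfun_general hq).tsum_eq
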